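/- Let (g_0, …, g_{K−1}; i_0, …, i_{K−1}) be a cyclic stabilizer configuration of length K ≥ 3 on Q. Then the iterated symmetric difference satisfies Δ = (g_0 ∪ g_1 ∪ ⋯ ∪ g_{K−1}) \ I, and |Δ| = (Σ_{k=0}^{K−1} |g_k|) − 2K. -/

import Mathlib

open Finset

/-- The iterated symmetric difference `g 0 ∆ g 1 ∆ ⋯ ∆ g (K-1)`. -/
def iterSD {Q : Type*} [DecidableEq Q] (K : ℕ) (g : ZMod K → Finset Q) : Finset Q :=
  (List.range K).foldr (fun k acc => symmDiff (g (k : ZMod K)) acc) ∅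

theorem mem_foldr_sd {Q : Type*} [DecidableEq Q] (h : ℕ → Finset Q) (q : Q) (l : List ℕ) :
    q ∈ l.foldr (fun k acc => symmDiff (h k) acc) ∅ ↔
      Odd ((l.map (fun k => if q ∈ h k then 1 else 0)).sum) := by
  induction l with
  | nil => simp
  | cons a l ih =>
    rw [List.foldr_cons, Finset.mem_symmDiff, ih, List.map_cons, List.sum_cons]
    by_cases ha : q ∈ h a
    · simp [ha, Nat.odd_add]
    · simp [ha]

theorem mem_iterSD {Q : Type*} [DecidableEq Q] (K : ℕ) [NeZero K] (g : ZMod K → Finset Q) (q : Q) :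
    q ∈ iterSD K g ↔ Odd (∑ k, if q ∈ g k then 1 else 0) := by
  have h1 : (∑ k : ZMod K, if q ∈ g k then 1 else 0) =
      ∑ k ∈ Finset.range K, if q ∈ g (k : ZMod K) then 1 else 0 := by
    refine Finset.sum_bij (fun k _ => k.val) ?_ ?_ ?_ ?_
    · intro a _; simpa using ZMod.val_lt a
    · intro a _ b _ hab; exact ZMod.val_injective K hab
    · intro b hb
      exact ⟨(b : ZMod K), Finset.mem_univ _, ZMod.val_cast_of_lt (by simpa using hb)⟩
    · intro a _; simp
  have h2 : ∀ (f : ℕ → ℕ) (n : ℕ), ∑ k ∈ Finset.range n, f k = ((List.range n).map f).sum := by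
    intro f n
    induction n with
    | zero => simp
    | succ n ih => simp [List.range_succ, Finset.sum_range_succ, ih]
  rw [h1, h2]
  have h3 := mem_foldr_sd (fun k => g (k : ZMod K)) q (List.range K)
  rw [← h3]
  have h4 : ∀ l : List ℕ, (l >>= fun a => pure (a : ZMod K)) = List.map (Nat.cast : ℕ → ZMod K) l := by
    intro l
    induction l with
    | nil => rfl
    | cons a l ih => rw [List.map_cons, ← ih]; rfl
  unfold iterSD
  rw [h4, List.foldr_map]

/-- For a cyclic stabilizer configuration, the iterated symmetric difference equals
the union of the `g k` minus the intersection points, and its cardinality is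
`∑ |g k| − 2K`. -/
theorem stmt15 {Q : Type*} [DecidableEq Q] (K : ℕ) [NeZero K] (hK : 3 ≤ K)
    (g : ZMod K → Finset Q) (idx : ZMod K → Q)
    (hidx : Function.Injective idx)
    (hadj : ∀ k, g k ∩ g (k + 1) = {idx k})
    (hfar : ∀ k k' : ZMod K, k' ≠ k - 1 → k' ≠ k → k' ≠ k + 1 → g k ∩ g k' = ∅) :
    iterSD K g = (Finset.univ.biUnion g) \ (Finset.univ.image idx) ∧
      (iterSD K g).card = (∑ k, (g k).card) - 2 * K := by
  have h10 : (1 : ZMod K) ≠ 0 := by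
    haveI : Fact (1 < K) := ⟨by omega⟩
    exact one_ne_zero
  have hm : ∀ k, idx k ∈ g k ∧ idx k ∈ g (k + 1) := fun k => by
    rw [← Finset.mem_inter, hadj]; simp
  have hu : ∀ k q, q ∈ g k → q ∈ g (k + 1) → q = idx k := fun k q h1 h2 => by
    have := Finset.mem_inter.2 ⟨h1, h2⟩
    rw [hadj] at this; simpa using this
  have hpair : ∀ q j k, q ∈ g j → q ∈ g k → j ≠ k → q = idx j ∨ q = idx k := by
    intro q j k hj hk hne
    by_cases h1 : k = j + 1
    · subst h1; exact Or.inl (hu _ _ hj hk)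
    by_cases h2 : k = j - 1
    · right; apply hu _ _ hk; rw [h2]; simpa using hj
    have := hfar j k h2 hne.symm h1
    have h3 := Finset.mem_inter.2 ⟨hj, hk⟩
    rw [this] at h3; simp at h3
  have hI : ∀ k, (∑ j, if idx k ∈ g j then 1 else 0) = 2 := by
    intro k
    have : (Finset.univ.filter fun j => idx k ∈ g j) = {k, k + 1} := by
      ext j
      simp only [Finset.mem_filter, Finset.mem_univ, true_and, Finset.mem_insert,
        Finset.mem_singleton]
      constructor
      · intro hj
        by_contra hc
        push Not at hc
        rcases hpair _ j (k + 1) hj (hm k).2 hc.2 with h | h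
        · exact hc.1 (hidx h).symm
        · have := hidx h
          exact h10 (by simpa using this)
      · rintro (rfl | rfl)
        · exact (hm _).1
        · exact (hm _).2
    rw [← Finset.card_filter, this, Finset.card_pair]
    intro h
    exact h10 (by simpa using h)
  have hN : ∀ q, q ∈ Finset.univ.biUnion g → q ∉ Finset.univ.image idx →
      (∑ j, if q ∈ g j then 1 else 0) = 1 := by
    intro q hq hn
    simp only [Finset.mem_biUnion, Finset.mem_univ, true_and, Finset.mem_image, not_exists] at hq hn
    obtain ⟨k, hk⟩ := hq
    rw [← Finset.card_filter, Finset.card_eq_one]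
    refine ⟨k, ?_⟩
    ext j
    simp only [Finset.mem_filter, Finset.mem_univ, true_and, Finset.mem_singleton]
    constructor
    · intro hj
      by_contra hc
      rcases hpair _ _ _ hj hk hc with h | h
      · exact hn _ h.symm
      · exact hn _ h.symm
    · rintro rfl; exact hk
  have hE : iterSD K g = (Finset.univ.biUnion g) \ (Finset.univ.image idx) := by
    ext q
    rw [mem_iterSD, Finset.mem_sdiff]
    by_cases hi : q ∈ Finset.univ.image idx
    · obtain ⟨k, _, rfl⟩ := Finset.mem_image.1 hi
      rw [hI]
      simp [hi]
    · by_cases hq : q ∈ Finset.univ.biUnion g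
      · rw [hN q hq hi]; simp only [hq, hi]; simp
      · have : ∀ j, q ∉ g j := fun j hj => hq (Finset.mem_biUnion.2 ⟨j, Finset.mem_univ _, hj⟩)
        simp [this]
  refine ⟨hE, ?_⟩
  rw [hE]
  have hsub : Finset.univ.image idx ⊆ Finset.univ.biUnion g := by
    intro q hq
    obtain ⟨k, _, rfl⟩ := Finset.mem_image.1 hq
    exact Finset.mem_biUnion.2 ⟨k, Finset.mem_univ _, (hm k).1⟩
  have hcI : (Finset.univ.image idx).card = K := by
    rw [Finset.card_image_of_injective _ hidx, Finset.card_univ, ZMod.card]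
  have hsum : (∑ k, (g k).card) =
      ∑ q ∈ Finset.univ.biUnion g, ∑ j, if q ∈ g j then 1 else 0 := by
    rw [Finset.sum_comm]
    refine Finset.sum_congr rfl fun k _ => ?_
    rw [← Finset.card_filter]
    congr 1
    ext q
    simp only [Finset.mem_filter, Finset.mem_biUnion, Finset.mem_univ, true_and]
    exact ⟨fun h => ⟨⟨k, h⟩, h⟩, fun h => h.2⟩
  rw [hsum, ← Finset.sum_sdiff hsub,
    Finset.sum_congr rfl (fun q hq => hN q (Finset.mem_sdiff.1 hq).1 (Finset.mem_sdiff.1 hq).2),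
    Finset.sum_image (fun a _ b _ h => hidx h), Finset.sum_congr rfl (fun k _ => hI k)]
  simp only [Finset.sum_const, Finset.card_univ, ZMod.card, smul_eq_mul]
  omega
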